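/- Let (B, ν) be a probability space, H a real or complex Hilbert space, F : B → H a bounded strongly measurable function, and y ∈ H; for ε > 0 set E_ε = {b ∈ B : ‖F(b) − y‖ < ε}. Let (Sₙ) be a sequence of measurable bijections of B with measurable inverses, (Uₙ) a sequence of bounded linear operators on H, and (δₙ) a sequence of nonnegative reals with δₙ → 0 such that ‖Uₙ(F(b) − y)‖² ≤ ‖F(b) − y‖² + δₙ for every n and every b ∈ B. Assume: (i) for every ε > 0, ν(E_ε) > 0 and ν(E_ε ∩ {b : Sₙ⁻¹ b ∈ E_ε}) → ν(E_ε) as n → ∞; (ii) ∫_B ‖Uₙ(F(Sₙ⁻¹ b)) − F(b)‖² dν(b) → 0 as n → ∞. Then ‖Uₙ y − y‖ → 0. -/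

import Mathlib

open MeasureTheory Filter

/-!
Markov's inequality turns (ii) into convergence in measure of `b ↦ Uₙ (F (Sₙ⁻¹ b))` to `F`. By (i)
the set of `b` at which both `F b` and `F (Sₙ⁻¹ b)` are `ε`-close to `y` keeps a positive measure,
so for large `n` it contains a point `b` that also satisfies `‖Uₙ (F (Sₙ⁻¹ b)) - F b‖ < ε`. At such
a point `‖Uₙ y - y‖ ≤ √(ε² + δₙ) + 2 ε`, by the triangle inequality along
`Uₙ y`, `Uₙ (F (Sₙ⁻¹ b))`, `F b`, `y`.
-/

section ConvergenceInMeasure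

variable {α ι E : Type*} [MeasurableSpace α] {μ : Measure α} {l : Filter ι}
  [SeminormedAddCommGroup E] {f : ι → α → E} {g : α → E}

theorem tendstoInMeasure_of_tendsto_integral_norm_sub_pow {p : ℕ}
    (hint : ∀ i, Integrable (fun x => ‖f i x - g x‖ ^ p) μ)
    (hlim : Tendsto (fun i => ∫ x, ‖f i x - g x‖ ^ p ∂μ) l (nhds 0)) :
    TendstoInMeasure μ f l g := by
  refine tendstoInMeasure_of_ne_top fun ε hε hε_top => ?_
  have hεp : ε ^ p ≠ 0 := pow_ne_zero p hε.ne'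
  have hεp_top : ε ^ p ≠ ⊤ := ENNReal.pow_ne_top hε_top
  have markov (i : ι) : μ {x | ε ≤ edist (f i x) (g x)} ≤
      ENNReal.ofReal (∫ x, ‖f i x - g x‖ ^ p ∂μ) / ε ^ p := by
    rw [ofReal_integral_eq_lintegral_ofReal (hint i) (.of_forall fun x => by positivity)]
    refine (measure_mono fun x hx => ?_).trans
      (meas_ge_le_lintegral_div (hint i).aemeasurable.ennreal_ofReal hεp hεp_top)
    rw [Set.mem_ofPred_eq, ENNReal.ofReal_pow (norm_nonneg _), ofReal_norm, ← edist_eq_enorm_sub]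
    exact pow_le_pow_left₀ zero_le hx p
  refine tendsto_of_tendsto_of_tendsto_of_le_of_le tendsto_const_nhds ?_
    (fun _ => zero_le) markov
  simpa using ENNReal.Tendsto.div_const (ENNReal.tendsto_ofReal hlim) (.inr hεp)

theorem eventually_exists_mem_norm_sub_lt_of_tendstoInMeasure (hfg : TendstoInMeasure μ f l g)
    {A : ι → Set α} (hA : 0 < liminf (fun i => μ (A i)) l) {ε : ℝ} (hε : 0 < ε) :
    ∀ᶠ i in l, ∃ x ∈ A i, ‖f i x - g x‖ < ε := by
  obtain ⟨c, hc, hcA⟩ := exists_between hA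
  have hbad := (tendstoInMeasure_iff_norm.1 hfg ε hε).eventually_lt_const hc
  filter_upwards [hbad, eventually_lt_of_lt_liminf hcA] with i hbad_i hA_i
  by_contra! hfar
  exact (hbad_i.trans hA_i).not_ge (measure_mono hfar)

end ConvergenceInMeasure

theorem memLp_clm_comp_sub_of_bounded {𝕜 B H : Type*} [MeasurableSpace B] {ν : Measure B}
    [IsFiniteMeasure ν] [NontriviallyNormedField 𝕜] [NormedAddCommGroup H] [NormedSpace 𝕜 H]
    {F : B → H} (hF : StronglyMeasurable F) {C : ℝ} (hC : ∀ b, ‖F b‖ ≤ C) {T : B → B}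
    (hT : Measurable T) (U : H →L[𝕜] H) (p : ENNReal) :
    MemLp (fun b => U (F (T b)) - F b) p ν :=
  (U.comp_memLp' (.of_bound (hF.comp_measurable hT).aestronglyMeasurable C
    (.of_forall fun b => hC (T b)))).sub
    (.of_bound hF.aestronglyMeasurable C (.of_forall hC))

section AlmostFixedVectors

variable {H 𝓕 : Type*} [SeminormedAddCommGroup H] [FunLike 𝓕 H H] [AddMonoidHomClass 𝓕 H H]

theorem norm_map_sub_self_le (U : 𝓕) (x y z : H) :
    ‖U y - y‖ ≤ ‖U (x - y)‖ + ‖U x - z‖ + ‖z - y‖ := by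
  have hsplit : U y - y = -U (x - y) + (U x - z) + (z - y) := by
    rw [map_sub]
    abel
  rw [hsplit, ← norm_neg (U (x - y))]
  exact norm_add₃_le

theorem stmt_4_general {B ι : Type*} [MeasurableSpace B] {ν : Measure B} {l : Filter ι}
    {F : B → H} {y : H} {T : ι → B → B} {U : ι → 𝓕} {δ : ι → ℝ}
    (hδ : Tendsto δ l (nhds 0))
    (hU : ∀ i b, ‖U i (F b - y)‖ ^ 2 ≤ ‖F b - y‖ ^ 2 + δ i)
    (hy : ∀ ε : ℝ, 0 < ε →
      0 < liminf (fun i => ν {b | ‖F b - y‖ < ε ∧ ‖F (T i b) - y‖ < ε}) l)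
    (hUF : TendstoInMeasure ν (fun i b => U i (F (T i b))) l F) :
    Tendsto (fun i => ‖U i y - y‖) l (nhds 0) := by
  suffices h : ∀ ε : ℝ, 0 < ε → ∀ᶠ i in l, ‖U i y - y‖ < 4 * ε by
    refine Metric.tendsto_nhds.2 fun η hη => ?_
    filter_upwards [h (η / 4) (by positivity)] with i hi
    rw [dist_zero_right, norm_norm]
    linarith
  intro ε hε
  filter_upwards [hδ.eventually_lt_const (pow_pos hε 2),
    eventually_exists_mem_norm_sub_lt_of_tendstoInMeasure hUF (hy ε hε) hε]
    with i hδi ⟨b, ⟨hb, hTb⟩, hUb⟩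
  have hU_small : ‖U i (F (T i b) - y)‖ < 2 * ε := by
    refine lt_of_pow_lt_pow_left₀ 2 (by positivity) ?_
    calc ‖U i (F (T i b) - y)‖ ^ 2 ≤ ‖F (T i b) - y‖ ^ 2 + δ i := hU i (T i b)
      _ < ε ^ 2 + ε ^ 2 := by gcongr
      _ ≤ (2 * ε) ^ 2 := by nlinarith
  linarith [norm_map_sub_self_le (U i) (F (T i b)) y (F b)]

end AlmostFixedVectors

/-- The main analytic step (almost-isometric case): if `y` is an essential value of the
bounded strongly measurable `F : B → H` in the strong sense (i), the operators `Uₙ` are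
almost isometric on the range of `F - y` with defect `δₙ → 0`, and the twisted
differences (ii) tend to `0` in `L²`, then `‖Uₙ y - y‖ → 0`. -/
theorem stmt_4 {𝕜 : Type*} [RCLike 𝕜]
    {B : Type*} [MeasurableSpace B] (ν : Measure B) [IsProbabilityMeasure ν]
    {H : Type*} [NormedAddCommGroup H] [InnerProductSpace 𝕜 H] [CompleteSpace H]
    (F : B → H) (hF : StronglyMeasurable F) (hFbdd : ∃ C : ℝ, ∀ b, ‖F b‖ ≤ C)
    (y : H) (S : ℕ → B ≃ᵐ B) (U : ℕ → H →L[𝕜] H)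
    (δ : ℕ → ℝ) (hδ : ∀ n, 0 ≤ δ n) (hδ0 : Tendsto δ atTop (nhds 0))
    (hU : ∀ n, ∀ b, ‖(U n) (F b - y)‖ ^ 2 ≤ ‖F b - y‖ ^ 2 + δ n)
    (hi : ∀ ε : ℝ, 0 < ε →
      0 < ν {b | ‖F b - y‖ < ε} ∧
      Tendsto
        (fun n =>
          (ν ({b | ‖F b - y‖ < ε} ∩ {b | (S n).symm b ∈ {b | ‖F b - y‖ < ε}})).toReal)
        atTop (nhds (ν {b | ‖F b - y‖ < ε}).toReal))
    (hii : Tendsto (fun n => ∫ b, ‖(U n) (F ((S n).symm b)) - F b‖ ^ 2 ∂ν)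
      atTop (nhds 0)) :
    Tendsto (fun n => ‖(U n) y - y‖) atTop (nhds 0) := by
  obtain ⟨C, hC⟩ := hFbdd
  refine stmt_4_general hδ0 hU (T := fun n => (S n).symm) (fun ε hε => ?_)
    (tendstoInMeasure_of_tendsto_integral_norm_sub_pow (fun n =>
      (memLp_clm_comp_sub_of_bounded hF hC (S n).symm.measurable (U n) 2).integrable_norm_pow
        two_ne_zero) hii)
  obtain ⟨hpos, hlim⟩ := hi ε hε
  exact hpos.trans_eq ((ENNReal.tendsto_toReal_iff (fun _ => measure_ne_top ν _)
    (measure_ne_top ν _)).1 hlim).liminf_eq.symm
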